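/- For every m ≥ 5, the cover array of the Fibonacci string Fib_m contains exactly 2m − 4 distinct values; that is, the set {Cov_Fib[ℓ] : 1 ≤ ℓ ≤ F_m} has cardinality 2m − 4. In particular, the number of distinct values in the cover array of Fib_m is Θ(m) = Θ(log F_m). -/

import Mathlib

section Defs

variable {α : Type*}

/-- `C` occurs in `T` at starting position `i`. -/
def OccursAt (C T : List α) (i : ℕ) : Prop :=
  i + C.length ≤ T.length ∧ (T.drop i).take C.length = C

/-- `C` is a cover of `T`: `C` occurs in `T` and every position of `T`
lies within an occurrence of `C`. -/
def IsCover (C T : List α) : Prop :=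
  (∃ i, OccursAt C T i) ∧
    ∀ q, q < T.length → ∃ i, OccursAt C T i ∧ i ≤ q ∧ q < i + C.length

/-- A border of `T` is both a prefix and a suffix of `T`. -/
def IsBorder (B T : List α) : Prop := B <+: T ∧ B <:+ T

/-- `p` is a period of `U`: `U[i] = U[i+p]` for all `0 ≤ i < |U| - p`. -/
def IsPeriod (p : ℕ) (U : List α) : Prop :=
  0 < p ∧ ∀ i, i + p < U.length → U[i]? = U[i + p]?

/-- `U` is aperiodic: its smallest period `p` satisfies `2p > |U|`
(equivalently, every period `p` of `U` satisfies `2p > |U|`). -/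
def StrAperiodic (U : List α) : Prop := ∀ p, IsPeriod p U → U.length < 2 * p

/-- A nonempty string `X` is primitive if `X = Y^t` implies `t = 1`. -/
def StrPrimitive (X : List α) : Prop :=
  X ≠ [] ∧ ∀ (Y : List α) (t : ℕ), X = (List.replicate t Y).flatten → t = 1

/-- A string is superprimitive if it has no proper cover. -/
def Superprimitive (T : List α) : Prop :=
  ¬ ∃ C : List α, IsCover C T ∧ C.length < T.length

/-- The length of the shortest cover of `T`. -/
noncomputable def covLen (T : List α) : ℕ :=
  sInf {c | ∃ C : List α, C.length = c ∧ IsCover C T}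

/-- `{a, a+p, ..., a+(t-1)p}` is a maximal arithmetic progression with
difference `p` inside the set `S`. -/
def MaxProg (S : Set ℕ) (p a t : ℕ) : Prop :=
  0 < t ∧ (∀ r, r < t → a + r * p ∈ S) ∧ (∀ b, b + p = a → b ∉ S) ∧ a + t * p ∉ S

end Defs

/-- Fibonacci strings over `Bool` (`true` = a, `false` = b):
`Fib_0 = b`, `Fib_1 = a`, `Fib_m = Fib_{m-1} Fib_{m-2}`. -/
def fibWord : ℕ → List Bool
  | 0 => [false]
  | 1 => [true]
  | (m + 2) => fibWord (m + 1) ++ fibWord m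

/-- Fibonacci numbers `F_k = |Fib_k|`: `F_0 = F_1 = 1`, `F_2 = 2`, `F_3 = 3`, ... -/
def F (k : ℕ) : ℕ := (fibWord k).length

/-- The `n`-th letter of the infinite Fibonacci word (each `Fib_m`, `m ≥ 1`,
is a prefix of the infinite word, and `F_{n+2} > n`). -/
def fibInf (n : ℕ) : Bool := (fibWord (n + 2)).getD n false

/-- The length-`ℓ` prefix `Fib[0..ℓ)` of the infinite Fibonacci word. -/
def fibPrefix (ℓ : ℕ) : List Bool := (List.range ℓ).map fibInf

/-- `Cov_Fib[ℓ]`: the length of the shortest cover of `Fib[0..ℓ)`. -/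
noncomputable def covFib (ℓ : ℕ) : ℕ := covLen (fibPrefix ℓ)

theorem F_rec (k : ℕ) : F (k + 2) = F (k + 1) + F k := by
  simp [F, fibWord]

theorem F_zero : F 0 = 1 := rfl
theorem F_one : F 1 = 1 := rfl

theorem F_pos (k : ℕ) : 1 ≤ F k := by
  induction k using Nat.strong_induction_on with
  | _ k ih =>
    match k with
    | 0 => simp [F_zero]
    | 1 => simp [F_one]
    | k + 2 => rw [F_rec]; have := ih k (by omega); omega

theorem F_lt_succ (k : ℕ) (hk : 1 ≤ k) : F k < F (k + 1) := by
  obtain ⟨k, rfl⟩ : ∃ j, k = j + 1 := ⟨k - 1, by omega⟩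
  rw [F_rec]; have := F_pos k; omega

theorem F_mono : Monotone F := by
  apply monotone_nat_of_le_succ
  intro k
  rcases Nat.eq_zero_or_pos k with rfl | h
  · simp [F_zero, F_one]
  · exact (F_lt_succ k h).le

theorem F_lt {a b : ℕ} (ha : 1 ≤ a) (h : a < b) : F a < F b :=
  (F_lt_succ a ha).trans_le (F_mono h)

theorem lt_F (n : ℕ) : n < F (n + 1) := by
  induction n with
  | zero => simp [F_one]
  | succ n ih => have := F_lt_succ (n + 1) (by omega); omega

theorem fibWord_prefix (m : ℕ) (hm : 1 ≤ m) (d : ℕ) : fibWord m <+: fibWord (m + d) := by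
  induction d with
  | zero => simp
  | succ d ih =>
    refine ih.trans ?_
    obtain ⟨e, he⟩ : ∃ e, m + d = e + 1 := ⟨m + d - 1, by omega⟩
    rw [← add_assoc, he]
    exact ⟨fibWord e, by simp [fibWord]⟩

theorem prefix_getD {A B : List Bool} (h : A <+: B) (n : ℕ) (hn : n < A.length) :
    A.getD n false = B.getD n false := by
  obtain ⟨C, rfl⟩ := h
  rw [List.getD_append _ _ _ _ hn]

theorem fibInf_eq (m n : ℕ) (hm : 1 ≤ m) (hn : n < F m) :
    fibInf n = (fibWord m).getD n false := by
  unfold fibInf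
  rcases le_total m (n + 2) with h | h
  · obtain ⟨d, hd⟩ := Nat.exists_eq_add_of_le h
    rw [hd]
    exact (prefix_getD (fibWord_prefix m hm d) n hn).symm
  · obtain ⟨d, hd⟩ := Nat.exists_eq_add_of_le h
    rw [hd]
    refine prefix_getD (fibWord_prefix (n + 2) (by omega) d) n ?_
    exact (lt_F n).trans_le (F_mono (by omega))

/-- Recurrence of the Fibonacci word. -/
theorem fib_R (j i : ℕ) (hj : 1 ≤ j) (hi : i < F j) : fibInf (i + F (j + 1)) = fibInf i := by
  rw [fibInf_eq (j + 2) _ (by omega) (by rw [F_rec]; omega), fibInf_eq j i hj hi]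
  rw [fibWord, List.getD_append_right _ _ _ _ (by change F (j + 1) ≤ _; omega)]
  congr 1
  change i + F (j + 1) - F (j + 1) = i
  omega

/-- Periodicity. -/
theorem fib_P (j : ℕ) (hj : 1 ≤ j) : ∀ i, i + 2 < F (j + 1) → fibInf (i + F j) = fibInf i := by
  induction j, hj using Nat.le_induction with
  | base => intro i hi; simp [F_rec, F_one, F_zero] at hi
  | succ j hj ih =>
    intro i hi
    rcases lt_or_ge i (F j) with h | h
    · exact fib_R j i hj h
    · obtain ⟨s, rfl⟩ := Nat.exists_eq_add_of_le' h
      rw [F_rec] at hi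
      rw [ih s (by omega), show s + F j + F (j + 1) = s + F (j + 1 + 1) by rw [F_rec]; omega]
      exact fib_R (j + 1) s (by omega) (by omega)

theorem two_le_F (k : ℕ) (hk : 2 ≤ k) : 2 ≤ F k := F_mono hk

/-- Mismatch. -/
theorem fib_M (j : ℕ) (hj : 2 ≤ j) : fibInf (F (j + 1) - 2) ≠ fibInf (F j - 2) := by
  induction j, hj using Nat.le_induction with
  | base => decide
  | succ j hj ih =>
    have h2 := two_le_F j hj
    have : F (j + 1 + 1) - 2 = (F j - 2) + F (j + 1) := by rw [F_rec]; omega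
    rw [this, fib_R j _ (by omega) (by omega)]
    exact ih.symm

theorem fib_A (j : ℕ) : ∀ i, 1 ≤ i → i < F j →
    ∃ t, t + 1 < F j ∧ t + i + 1 < F (j + 1) ∧ fibInf (t + i) ≠ fibInf t := by
  induction j using Nat.strong_induction_on with
  | _ j ih =>
    match j with
    | 0 => intro i h1 h2; rw [F_zero] at h2; omega
    | 1 => intro i h1 h2; rw [F_one] at h2; omega
    | j + 2 =>
      intro i h1 h2
      have hr := F_rec j
      have hr' := F_rec (j + 1)
      have hp := F_pos j
      have hp' := F_pos (j + 1)
      rcases lt_trichotomy i (F (j + 1)) with h | h | h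
      · obtain ⟨t, a, b, c⟩ := ih (j + 1) (by omega) i h1 h
        simp only [Nat.add_assoc, Nat.reduceAdd] at *
        exact ⟨t, by omega, by omega, c⟩
      · subst h
        have hM := fib_M (j + 2) (by omega)
        refine ⟨F (j + 2) - 2, by omega, ?_, ?_⟩
        · simp only [Nat.add_assoc, Nat.reduceAdd] at *; omega
        · rwa [show F (j + 2) - 2 + F (j + 1) = F (j + 2 + 1) - 2 by
            simp only [Nat.add_assoc, Nat.reduceAdd] at *; omega]
      · obtain ⟨s, rfl⟩ := Nat.exists_eq_add_of_le' h.le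
        obtain ⟨t, a, b, c⟩ := ih j (by omega) s (by omega) (by omega)
        refine ⟨t, by omega, ?_, ?_⟩
        · simp only [Nat.add_assoc, Nat.reduceAdd] at *; omega
        · rw [← add_assoc, fib_P (j + 1) (by omega) (t + s)]
          · exact c
          · simp only [Nat.add_assoc, Nat.reduceAdd] at *; omega

/-- Numeric form of the cover relation between prefixes. -/
def Cv (c l : ℕ) : Prop :=
  ∀ q, q < l → ∃ i, i ≤ q ∧ q < i + c ∧ i + c ≤ l ∧ ∀ t, t < c → fibInf (t + i) = fibInf t

theorem Cv_self (l : ℕ) : Cv l l := fun q hq => ⟨0, by omega, by omega, by omega, by simp⟩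

theorem Cv.pos {c l : ℕ} (h : Cv c l) (hl : 1 ≤ l) : 1 ≤ c := by
  obtain ⟨i, a, b, _⟩ := h 0 (by omega); omega

theorem Cv.le {c l : ℕ} (h : Cv c l) (hl : 1 ≤ l) : c ≤ l := by
  obtain ⟨i, a, b, _⟩ := h 0 (by omega); omega

theorem Cv.border {c l : ℕ} (h : Cv c l) (hl : 1 ≤ l) :
    ∀ t, t < c → fibInf (t + (l - c)) = fibInf t := by
  obtain ⟨i, a, b, d, e⟩ := h (l - 1) (by omega)
  have : i = l - c := by omega
  rwa [this] at e

theorem Cv.trans {a b l : ℕ} (h1 : Cv a b) (h2 : Cv b l) : Cv a l := by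
  intro q hq
  obtain ⟨i, p1, p2, p3, p4⟩ := h2 q hq
  obtain ⟨k, q1, q2, q3, q4⟩ := h1 (q - i) (by omega)
  refine ⟨k + i, by omega, by omega, by omega, fun t ht => ?_⟩
  rw [← add_assoc, p4 _ (by omega), q4 t ht]

/-- `F j - 1` is never a proper cover. -/
theorem not_Cv_F {j l : ℕ} (hl : F j - 1 < l) : ¬ Cv (F j - 1) l := by
  intro h
  obtain ⟨i, p1, p2, p3, p4⟩ := h (F j - 1) hl
  have := F_pos j
  obtain ⟨t, a, _, c⟩ := fib_A j i (by omega) (by omega)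
  exact c (p4 t (by omega))

/-- Nonempty borders of the prefix of length `F k - 1`. -/
theorem border_F (k : ℕ) : ∀ c, 1 ≤ c → c < F k - 1 →
    (∀ t, t < c → fibInf (t + (F k - 1 - c)) = fibInf t) → ∃ j, c = F j - 1 := by
  induction k using Nat.strong_induction_on with
  | _ k ih =>
    match k with
    | 0 => intro c h1 h2; rw [F_zero] at h2; omega
    | 1 => intro c h1 h2; rw [F_one] at h2; omega
    | k + 2 =>
      intro c h1 h2 hb
      have hr := F_rec k
      have hp := F_pos k
      have hge : F (k + 1) ≤ F (k + 2) - 1 - c := by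
        by_contra hlt
        obtain ⟨t, a, b, e⟩ := fib_A (k + 1) (F (k + 2) - 1 - c) (by omega) (by omega)
        simp only [Nat.add_assoc, Nat.reduceAdd] at b
        exact e (hb t (by omega))
      rcases Nat.lt_or_ge c (F k - 1) with h | h
      · refine ih k (by omega) c h1 h fun t ht => ?_
        rw [← hb t ht, show t + (F (k + 2) - 1 - c) = t + (F k - 1 - c) + F (k + 1) by omega,
          fib_P (k + 1) (by omega)]
        have := F_pos (k + 1)
        simp only [Nat.add_assoc, Nat.reduceAdd] at *
        omega
      · exact ⟨k, by omega⟩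

theorem sp_F {k c : ℕ} (hk : 2 ≤ k) (h : Cv c (F k - 1)) : c = F k - 1 := by
  have h2 := two_le_F k hk
  have hle := h.le (by omega)
  by_contra hne
  obtain ⟨j, rfl⟩ := border_F k c (h.pos (by omega)) (by omega) (h.border (by omega))
  exact not_Cv_F (by omega) h

theorem sp_2F {k c : ℕ} (hk : 2 ≤ k) (h : Cv c (2 * F k - 1)) : c = 2 * F k - 1 := by
  have h2 := two_le_F k hk
  have hle := h.le (by omega)
  have hb := h.border (by omega)
  have hlt' := F_lt_succ k (by omega)
  by_contra hne
  have hge : F k ≤ 2 * F k - 1 - c := by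
    by_contra hlt
    obtain ⟨t, a, b, e⟩ := fib_A k (2 * F k - 1 - c) (by omega) (by omega)
    have : F (k + 1) ≤ 2 * F k := by
      obtain ⟨k, rfl⟩ : ∃ j, k = j + 1 := ⟨k - 1, by omega⟩
      rw [F_rec]; have := F_mono (show k ≤ k + 1 by omega); omega
    exact e (hb t (by omega))
  have : ∃ j, c = F j - 1 := by
    rcases Nat.lt_or_ge c (F k - 1) with h' | h'
    · refine border_F k c (h.pos (by omega)) h' fun t ht => ?_
      rw [← hb t ht, show t + (2 * F k - 1 - c) = t + (F k - 1 - c) + F k by omega,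
        fib_P k (by omega)]
      omega
    · exact ⟨k, by omega⟩
  obtain ⟨j, rfl⟩ := this
  exact not_Cv_F (by omega) h

/-- Every other length has a proper cover. -/
theorem not_sp (l : ℕ) (hl : 1 ≤ l) (h1 : ∀ k, 2 ≤ k → l ≠ F k - 1)
    (h2 : ∀ k, 2 ≤ k → l ≠ 2 * F k - 1) : ∃ c, c < l ∧ Cv c l := by
  -- find `k` with `F k ≤ l + 1 < F (k + 1)`
  have hex : ∃ k, l + 1 < F (k + 1) := ⟨l + 1, lt_F _⟩
  classical
  obtain ⟨k, hk, hmin⟩ : ∃ k, l + 1 < F (k + 1) ∧ ∀ j, j < k → ¬ l + 1 < F (j + 1) :=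
    ⟨Nat.find hex, Nat.find_spec hex, fun j hj => Nat.find_min hex hj⟩
  have F2 : F 2 = 2 := rfl
  have F3 : F 3 = 3 := rfl
  have F4 : F 4 = 5 := rfl
  have hk4 : 3 ≤ k := by
    by_contra hlt
    have : F (k + 1) ≤ F 3 := F_mono (by omega)
    have := h1 2 (by omega)
    omega
  obtain ⟨n, rfl⟩ : ∃ n, k = n + 3 := ⟨k - 3, by omega⟩
  have hge := hmin (n + 2) (by omega)
  have hne := h1 (n + 3) (by omega)
  have hne2 := h2 (n + 2) (by omega)
  have r1 := F_rec n
  have r2 := F_rec (n + 1)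
  have r3 := F_rec (n + 2)
  have p0 := F_pos n
  have p1 := F_pos (n + 1)
  have m0 := F_mono (show n ≤ n + 1 by omega)
  simp only [Nat.add_assoc, Nat.reduceAdd] at *
  have P2 := fib_P (n + 2) (by omega)
  have P1 := fib_P (n + 1) (by omega)
  simp only [Nat.add_assoc, Nat.reduceAdd] at P1 P2
  rcases Nat.lt_or_ge l (2 * F (n + 2)) with h | h
  · refine ⟨l - F (n + 2), by omega, fun q hq => ?_⟩
    rcases Nat.lt_or_ge q (l - F (n + 2)) with hq1 | hq1
    · exact ⟨0, by omega, by omega, by omega, by simp⟩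
    rcases Nat.lt_or_ge q (F (n + 2)) with hq2 | hq2
    · exact ⟨F (n + 1), by omega, by omega, by omega, fun t ht => P1 t (by omega)⟩
    · exact ⟨F (n + 2), by omega, by omega, by omega, fun t ht => P2 t (by omega)⟩
  · refine ⟨l - F (n + 2), by omega, fun q hq => ?_⟩
    rcases Nat.lt_or_ge q (l - F (n + 2)) with hq1 | hq1
    · exact ⟨0, by omega, by omega, by omega, by simp⟩
    · exact ⟨F (n + 2), by omega, by omega, by omega, fun t ht => P2 t (by omega)⟩

theorem fibPrefix_length (l : ℕ) : (fibPrefix l).length = l := by simp [fibPrefix]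

theorem sub_eq (l i c : ℕ) (h : i + c ≤ l) :
    ((fibPrefix l).drop i).take c = (List.range c).map fun t => fibInf (t + i) := by
  apply List.ext_getElem
  · simp [fibPrefix]; omega
  · intro n h1 h2
    simp [fibPrefix, add_comm]

theorem isCover_iff {l : ℕ} (hl : 1 ≤ l) (c : ℕ) :
    (∃ C : List Bool, C.length = c ∧ IsCover C (fibPrefix l)) ↔ Cv c l := by
  constructor
  · rintro ⟨C, rfl, -, hC⟩
    rw [fibPrefix_length] at hC
    obtain ⟨i0, ⟨ho, he⟩, hi, -⟩ := hC 0 (by omega)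
    obtain rfl : i0 = 0 := by omega
    rw [fibPrefix_length] at ho
    rw [sub_eq _ _ _ ho] at he
    intro q hq
    obtain ⟨i, ⟨o1, o2⟩, a, b⟩ := hC q hq
    rw [fibPrefix_length] at o1
    rw [sub_eq _ _ _ o1, ← he] at o2
    refine ⟨i, a, b, o1, fun t ht => ?_⟩
    have := congrArg (fun L => L[t]?) o2
    simpa [ht] using this
  · intro h
    have key : ∀ i, i + c ≤ l → (∀ t, t < c → fibInf (t + i) = fibInf t) →
        OccursAt (fibPrefix c) (fibPrefix l) i := by
      intro i hi ht
      refine ⟨by simpa [fibPrefix_length] using hi, ?_⟩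
      rw [fibPrefix_length, sub_eq _ _ _ hi, fibPrefix]
      apply List.map_congr_left
      intro t hm
      exact ht t (by simpa using hm)
    refine ⟨fibPrefix c, fibPrefix_length c, ⟨0, key 0 ?_ (by simp)⟩, fun q hq => ?_⟩
    · simpa using h.le hl
    · rw [fibPrefix_length] at hq
      obtain ⟨i, a, b, d, e⟩ := h q hq
      exact ⟨i, key i d e, a, by rwa [fibPrefix_length]⟩

theorem covFib_eq {l : ℕ} (hl : 1 ≤ l) : covFib l = sInf {c | Cv c l} := by
  unfold covFib covLen
  congr 1
  ext c
  exact isCover_iff hl c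

theorem covFib_spec {l : ℕ} (hl : 1 ≤ l) : Cv (covFib l) l := by
  rw [covFib_eq hl]
  exact Nat.sInf_mem (s := {c | Cv c l}) ⟨l, Cv_self l⟩

theorem covFib_le {l c : ℕ} (hl : 1 ≤ l) (h : Cv c l) : covFib l ≤ c := by
  rw [covFib_eq hl]
  exact Nat.sInf_le h

theorem image_eq (m : ℕ) (hm : 5 ≤ m) : (Finset.Icc 1 (F m)).image covFib =
    (Finset.Icc 2 m).image (fun k => F k - 1) ∪
      (Finset.Icc 2 (m - 2)).image (fun k => 2 * F k - 1) := by
  ext v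
  simp only [Finset.mem_union, Finset.mem_image, Finset.mem_Icc]
  constructor
  · rintro ⟨l, ⟨hl, hlm⟩, rfl⟩
    have hs := covFib_spec hl
    have hp := hs.pos hl
    have hle := hs.le hl
    by_contra hcon
    push Not at hcon
    obtain ⟨c1, c2⟩ := hcon
    obtain ⟨c, hc, hcv⟩ := not_sp (covFib l) hp
      (fun k hk e => by
        rcases Nat.lt_or_ge m k with h | h
        · have := F_lt (by omega) h
          have hkm : F (m + 1) ≤ F k := F_mono h
          have hr := F_rec (m - 1)
          have h3 := two_le_F (m - 1) (by omega)
          rw [show m - 1 + 2 = m + 1 by omega, show m - 1 + 1 = m by omega] at hr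
          omega
        · exact c1 k ⟨hk, h⟩ e.symm)
      (fun k hk e => by
        rcases Nat.lt_or_ge (m - 2) k with h | h
        · have hkm : F (m - 1) ≤ F k := F_mono (by omega)
          have hr := F_rec (m - 2)
          have h3 := F_lt_succ (m - 2) (by omega)
          rw [show m - 2 + 2 = m by omega, show m - 2 + 1 = m - 1 by omega] at hr
          rw [show m - 2 + 1 = m - 1 by omega] at h3
          have hr2 := F_rec (m - 3)
          have h4 := two_le_F (m - 3) (by omega)
          rw [show m - 3 + 2 = m - 1 by omega, show m - 3 + 1 = m - 2 by omega] at hr2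
          omega
        · exact c2 k ⟨hk, h⟩ e.symm)
    have := covFib_le hl (hcv.trans hs)
    omega
  · rintro (⟨k, ⟨hk, hkm⟩, rfl⟩ | ⟨k, ⟨hk, hkm⟩, rfl⟩)
    · have h2 := two_le_F k hk
      have h3 := F_mono hkm
      exact ⟨F k - 1, ⟨by omega, by omega⟩, sp_F hk (covFib_spec (by omega))⟩
    · have h2 := two_le_F k hk
      have h3 : F k ≤ F (m - 2) := F_mono hkm
      have hr := F_rec (m - 2)
      have h4 := F_mono (show m - 2 ≤ m - 2 + 1 by omega)
      rw [show m - 2 + 2 = m by omega] at hr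
      exact ⟨2 * F k - 1, ⟨by omega, by omega⟩, sp_2F hk (covFib_spec (by omega))⟩

theorem F_inj {a b : ℕ} (ha : 1 ≤ a) (hb : 1 ≤ b) (h : F a = F b) : a = b := by
  rcases lt_trichotomy a b with h' | h' | h'
  · have := F_lt ha h'; omega
  · exact h'
  · have := F_lt hb h'; omega

/-- For every `m ≥ 5`, the cover array `Cov_Fib[1], ..., Cov_Fib[F_m]` of the
Fibonacci string `Fib_m` contains exactly `2m - 4` distinct values. -/
theorem stmt12 (m : ℕ) (hm : 5 ≤ m) :
    ((Finset.Icc 1 (F m)).image covFib).card = 2 * m - 4 := by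
  rw [image_eq m hm, Finset.card_union_of_disjoint, Finset.card_image_of_injOn,
    Finset.card_image_of_injOn]
  · simp only [Nat.card_Icc]; omega
  · intro a ha b hb h
    simp only [Finset.coe_Icc, Set.mem_Icc] at ha hb h
    have := two_le_F a ha.1
    have := two_le_F b hb.1
    exact F_inj (by omega) (by omega) (by omega)
  · intro a ha b hb h
    simp only [Finset.coe_Icc, Set.mem_Icc] at ha hb h
    have := two_le_F a ha.1
    have := two_le_F b hb.1
    exact F_inj (by omega) (by omega) (by omega)
  · rw [Finset.disjoint_left]
    intro v h1 h2
    simp only [Finset.mem_image, Finset.mem_Icc] at h1 h2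
    obtain ⟨a, ⟨ha, -⟩, rfl⟩ := h1
    obtain ⟨b, ⟨hb, -⟩, h⟩ := h2
    have := two_le_F a ha
    have := two_le_F b hb
    have hab : F a = 2 * F b := by omega
    have l1 := F_lt_succ b (by omega)
    have r1 := F_rec b
    have r2 := F_rec (b - 1)
    have l2 := F_lt_succ (b - 1) (by omega)
    rw [show b - 1 + 2 = b + 1 by omega, show b - 1 + 1 = b by omega] at r2
    rw [show b - 1 + 1 = b by omega] at l2
    rcases Nat.lt_or_ge a (b + 2) with h' | h'
    · have : F a ≤ F (b + 1) := F_mono (by omega)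
      omega
    · have : F (b + 2) ≤ F a := F_mono h'
      omega
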